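/- arXiv:1408.4897 — 2 statements merged into one kernel-verified Lean document; each statement's English description precedes it below -/
import Mathlib

section
/- Let I be an operator ideal with F(H) ⊆ I ⊆ K(H) (i.e., I is proper and nonzero). Then there exist uncountably many U_I(H)-conjugacy classes of Cartan subalgebras of I; more precisely, there exists a family (C_t)_{t ∈ [0, π/2)} of Cartan subalgebras of I such that whenever s ≠ t, there is no W ∈ U_I(H) with W C_s W* = C_t. -/
/-!
For a Hilbert basis `f`, the operators of `I` that are diagonal in `f` form a Cartan subalgebra:
* it is closed under adjoints because a diagonal `T` satisfies `T* = V T` with `V` the diagonal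
  unitary whose entries are the phases `conj c / c` of the eigenvalues `c` of `T`;
* it is maximal because an operator commuting with every rank-one projection `|f i⟩⟨f i|` is
  itself diagonal.

Group the given basis into pairs and rotate every pair by the angle `t`; this yields Hilbert bases
`f_t`, and `C_t` is the algebra of operators of `I` diagonal in `f_t`. If a unitary `W` conjugates
`C_s` onto `C_t`, then the rank-one projection onto `W (f_s i)` is diagonal in `f_t`, hence
`W (f_s i)` is a unimodular multiple of some `f_t j`. All inner products `⟪f_s i, f_t j⟫` have
modulus at most `max |cos (s - t)| |sin (s - t)| < 1`, so `‖(W - 1) (f_s i)‖` is bounded below by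
a positive constant. But `W - 1` is compact, and a compact operator sends every orthonormal
sequence to a sequence whose norms do not stay away from zero.
-/

open Set

/-- A (two-sided) operator ideal of `B(H)`. -/
def IsOperatorIdeal {H : Type*} [NormedAddCommGroup H] [InnerProductSpace ℂ H]
    (I : Set (H →L[ℂ] H)) : Prop :=
  (0 : H →L[ℂ] H) ∈ I ∧
  (∀ A B : H →L[ℂ] H, A ∈ I → B ∈ I → A + B ∈ I) ∧
  (∀ (c : ℂ) (A : H →L[ℂ] H), A ∈ I → c • A ∈ I) ∧
  (∀ (T A : H →L[ℂ] H), A ∈ I → T * A ∈ I ∧ A * T ∈ I)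

/-- `C` is a self-adjoint complex-linear subspace of `I` consisting of mutually
commuting operators. -/
def IsCommSelfAdjointSubspace {H : Type*} [NormedAddCommGroup H] [InnerProductSpace ℂ H]
    [CompleteSpace H] (I C : Set (H →L[ℂ] H)) : Prop :=
  C ⊆ I ∧
  (0 : H →L[ℂ] H) ∈ C ∧
  (∀ S T : H →L[ℂ] H, S ∈ C → T ∈ C → S + T ∈ C) ∧
  (∀ (c : ℂ) (T : H →L[ℂ] H), T ∈ C → c • T ∈ C) ∧
  (∀ T ∈ C, star T ∈ C) ∧
  (∀ S T : H →L[ℂ] H, S ∈ C → T ∈ C → S * T = T * S)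

/-- `C` is a Cartan subalgebra of the operator ideal `I`. -/
def IsCartanSubalgebra {H : Type*} [NormedAddCommGroup H] [InnerProductSpace ℂ H]
    [CompleteSpace H] (I C : Set (H →L[ℂ] H)) : Prop :=
  IsCommSelfAdjointSubspace I C ∧
  ∀ C' : Set (H →L[ℂ] H), IsCommSelfAdjointSubspace I C' → C ⊆ C' → C' = C

section CartanAux

open Filter Topology ComplexConjugate

variable {H : Type*} [NormedAddCommGroup H] [InnerProductSpace ℂ H]

/-! ### Diagonal operators and rank-one projections -/

/-- The operators in `I` for which every vector of the family `f` is an eigenvector. -/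
def diagonalPart {ι : Type*} (I : Set (H →L[ℂ] H)) (f : ι → H) : Set (H →L[ℂ] H) :=
  {T | T ∈ I ∧ ∀ i, ∃ c : ℂ, T (f i) = c • f i}

/-- The rank-one operator `x ↦ ⟪u, x⟫ u`. -/
noncomputable def rankOneProj (u : H) : H →L[ℂ] H := (innerSL ℂ u).smulRight u

lemma rankOneProj_apply (u x : H) : rankOneProj u x = inner ℂ u x • u := by
  simp [rankOneProj]

lemma rankOneProj_finite (u : H) :
    FiniteDimensional ℂ (LinearMap.range (rankOneProj u : H →ₗ[ℂ] H)) := by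
  have h : LinearMap.range (rankOneProj u : H →ₗ[ℂ] H) ≤ Submodule.span ℂ {u} := by
    rintro _ ⟨x, rfl⟩
    rw [ContinuousLinearMap.coe_coe, rankOneProj_apply]
    exact Submodule.smul_mem _ _ (Submodule.mem_span_singleton_self u)
  exact Submodule.finiteDimensional_of_le h

lemma basis_ext {ι : Type*} (f : HilbertBasis ι ℂ H) {S T : H →L[ℂ] H}
    (h : ∀ i, S (f i) = T (f i)) : S = T := by
  refine ContinuousLinearMap.ext_on (s := Set.range f) ?_ ?_
  · have := f.dense_span
    rw [dense_iff_closure_eq]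
    have h2 := congrArg (fun K : Submodule ℂ H => (K : Set H)) this
    simpa only [Submodule.topologicalClosure_coe, Submodule.top_coe] using h2
  · rintro _ ⟨i, rfl⟩
    exact h i

lemma basis_eq_zero {ι : Type*} (f : HilbertBasis ι ℂ H) {x : H}
    (h : ∀ i, inner ℂ (f i) x = 0) : x = 0 := by
  apply f.repr.injective
  ext i
  simp [HilbertBasis.repr_apply_apply, h]

lemma rankOneProj_mem {ι : Type*} {I : Set (H →L[ℂ] H)} {f : ι → H} (hf : Orthonormal ℂ f)
    (hFI : ∀ T : H →L[ℂ] H,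
      FiniteDimensional ℂ (LinearMap.range (T : H →ₗ[ℂ] H)) → T ∈ I) (i : ι) :
    rankOneProj (f i) ∈ diagonalPart I f := by
  classical
  refine ⟨hFI _ (rankOneProj_finite _), fun j => ⟨if i = j then 1 else 0, ?_⟩⟩
  rw [rankOneProj_apply, orthonormal_iff_ite.mp hf]
  split_ifs with h
  · rw [h]
  · simp

/-! ### Rotation of a family of pairs -/

/-- The family `e` rotated by the angle `t` within each pair `e (n, false)`, `e (n, true)`. -/
noncomputable def rotated (e : ℕ × Bool → H) (t : ℝ) : ℕ × Bool → H
  | (n, false) => (Real.cos t : ℂ) • e (n, false) + (Real.sin t : ℂ) • e (n, true)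
  | (n, true) => (-Real.sin t : ℂ) • e (n, false) + (Real.cos t : ℂ) • e (n, true)

/-- The inner product of the `i`-th vector of an orthonormal pair rotated by `s` with the `j`-th
vector of that pair rotated by `t`. -/
noncomputable def rotCoeff (s t : ℝ) : Bool → Bool → ℝ
  | false, false => Real.cos (s - t)
  | false, true => Real.sin (s - t)
  | true, false => -Real.sin (s - t)
  | true, true => Real.cos (s - t)

lemma inner_rotated {e : ℕ × Bool → H} (he : Orthonormal ℂ e) (s t : ℝ) (p q : ℕ × Bool) :
    inner ℂ (rotated e s p) (rotated e t q) =
      if p.1 = q.1 then (rotCoeff s t p.2 q.2 : ℂ) else 0 := by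
  obtain ⟨n, i⟩ := p
  obtain ⟨m, j⟩ := q
  have h := orthonormal_iff_ite.mp he
  cases i <;> cases j <;>
    simp only [rotated, rotCoeff, inner_add_left, inner_add_right, inner_smul_left,
      inner_smul_right, h, Prod.mk.injEq, map_neg, Complex.conj_ofReal, Real.cos_sub,
      Real.sin_sub] <;>
    by_cases hnm : n = m <;> simp [hnm] <;> ring

variable [CompleteSpace H]

/-! ### Diagonal operators form a Cartan subalgebra -/

/-- Unimodular scalars `v i` are the diagonal entries of a bounded (in fact unitary) operator,
which carries the basis `f` to the basis `v i • f i`. -/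
lemma exists_phase_operator {ι : Type*} (f : HilbertBasis ι ℂ H) (v : ι → ℂ)
    (hv : ∀ i, ‖v i‖ = 1) : ∃ V : H →L[ℂ] H, ∀ i, V (f i) = v i • f i := by
  classical
  have ho : Orthonormal ℂ (fun i => v i • f i) := by
    refine ⟨fun i => by rw [norm_smul, hv, f.orthonormal.1, one_mul], fun i j hij => ?_⟩
    simp only [inner_smul_left, inner_smul_right]
    rw [f.orthonormal.2 hij]
    simp
  have hb : (Submodule.span ℂ (Set.range fun i => v i • f i))ᗮ = ⊥ := by
    rw [eq_bot_iff]
    intro x hx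
    rw [Submodule.mem_bot]
    refine basis_eq_zero f fun i => ?_
    have h1 := (Submodule.mem_orthogonal _ _).mp hx (v i • f i) (Submodule.subset_span ⟨i, rfl⟩)
    rw [inner_smul_left] at h1
    refine (mul_eq_zero.mp h1).resolve_left fun h0 => ?_
    have : v i = 0 := by simpa using h0
    have h2 := hv i
    simp [this] at h2
  let g := HilbertBasis.mkOfOrthogonalEqBot ho hb
  refine ⟨(f.repr.trans g.repr.symm : H ≃ₗᵢ[ℂ] H).toContinuousLinearEquiv, fun i => ?_⟩
  have : g i = v i • f i := by
    simp [g]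
  change g.repr.symm (f.repr (f i)) = v i • f i
  rw [f.repr_self, g.repr_symm_single, this]

lemma adjoint_apply_eigen {ι : Type*} (f : HilbertBasis ι ℂ H) {T : H →L[ℂ] H} {c : ι → ℂ}
    (hc : ∀ i, T (f i) = c i • f i) (i : ι) : star T (f i) = conj (c i) • f i := by
  classical
  rw [← sub_eq_zero]
  refine basis_eq_zero f fun j => ?_
  rw [inner_sub_right, ContinuousLinearMap.star_eq_adjoint,
    ContinuousLinearMap.adjoint_inner_right, hc, inner_smul_left, inner_smul_right,
    orthonormal_iff_ite.mp f.orthonormal]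
  split_ifs with h
  · subst h; simp
  · simp

/-- Closure under adjoints uses `star T = V * T` with `V` a diagonal unitary of phases; maximality
uses that an operator commuting with all `rankOneProj (f i)` is diagonal. -/
lemma isCartan_diagonalPart {ι : Type*} (f : HilbertBasis ι ℂ H)
    (I : Set (H →L[ℂ] H)) (hI : IsOperatorIdeal I)
    (hFI : ∀ T : H →L[ℂ] H,
      FiniteDimensional ℂ (LinearMap.range (T : H →ₗ[ℂ] H)) → T ∈ I) :
    IsCartanSubalgebra I (diagonalPart I f) := by
  obtain ⟨h0, hadd, hsmul, hmul⟩ := hI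
  refine ⟨⟨fun T hT => hT.1, ⟨h0, fun i => ⟨0, by simp⟩⟩, ?_, ?_, ?_, ?_⟩, ?_⟩
  · rintro S T ⟨hS, hS'⟩ ⟨hT, hT'⟩
    refine ⟨hadd _ _ hS hT, fun i => ?_⟩
    obtain ⟨a, ha⟩ := hS' i
    obtain ⟨c, hc⟩ := hT' i
    exact ⟨a + c, by rw [add_apply, ha, hc, add_smul]⟩
  · rintro a T ⟨hT, hT'⟩
    refine ⟨hsmul _ _ hT, fun i => ?_⟩
    obtain ⟨c, hc⟩ := hT' i
    exact ⟨a * c, by rw [smul_apply, hc, mul_smul]⟩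
  · rintro T ⟨hT, hT'⟩
    choose c hc using hT'
    have hstar := adjoint_apply_eigen f hc
    refine ⟨?_, fun i => ⟨_, hstar i⟩⟩
    obtain ⟨V, hV⟩ := exists_phase_operator f
      (fun i => if c i = 0 then 1 else conj (c i) / c i) (fun i => by
        split_ifs with h
        · simp
        · simp [h])
    have : star T = V * T := by
      refine basis_ext f fun i => ?_
      rw [hstar, mul_apply_eq_comp, hc, map_smul, hV, smul_smul]
      split_ifs with h
      · simp [h]
      · rw [mul_div_cancel₀ _ h]
    rw [this]
    exact (hmul V T hT).1
  · rintro S T ⟨-, hS'⟩ ⟨-, hT'⟩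
    refine basis_ext f fun i => ?_
    obtain ⟨a, ha⟩ := hS' i
    obtain ⟨c, hc⟩ := hT' i
    simp only [mul_apply_eq_comp, ha, hc, map_smul, smul_smul, mul_comm]
  · rintro C' ⟨hC'I, -, -, -, -, hcomm⟩ hsub
    refine Set.Subset.antisymm (fun T hT => ⟨hC'I hT, fun i => ?_⟩) hsub
    have h1 := hcomm T _ hT (hsub (rankOneProj_mem f.orthonormal hFI i))
    have h2 := congrArg (fun A : H →L[ℂ] H => A (f i)) h1
    simp only [mul_apply_eq_comp, rankOneProj_apply] at h2
    refine ⟨_, Eq.trans ?_ h2⟩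
    simp [f.orthonormal.1 i]

/-! ### Conjugation of diagonal algebras and compactness -/

/-- If `W` conjugates the diagonal operators of `f` onto those of `g`, then it maps the lines of
`f` to lines of `g`: the rank-one operator attached to `W (f i)` is diagonal in `g`. -/
lemma exists_line {ι κ : Type*} (f : HilbertBasis ι ℂ H) (g : HilbertBasis κ ℂ H)
    {I : Set (H →L[ℂ] H)}
    (hFI : ∀ T : H →L[ℂ] H,
      FiniteDimensional ℂ (LinearMap.range (T : H →ₗ[ℂ] H)) → T ∈ I)
    {W : H →L[ℂ] H} (hW : W ∈ unitary (H →L[ℂ] H))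
    (h : (fun T : H →L[ℂ] H => W * T * star W) '' diagonalPart I f = diagonalPart I g) (i : ι) :
    ∃ (j : κ) (c : ℂ), W (f i) = c • g j := by
  have hmem : W * rankOneProj (f i) * star W ∈ diagonalPart I g :=
    h ▸ ⟨_, rankOneProj_mem f.orthonormal hFI i, rfl⟩
  have hWf : W (f i) ≠ 0 := by
    intro h0
    have h1 := congrArg (fun A : H →L[ℂ] H => A (f i)) (Unitary.star_mul_self_of_mem hW)
    simp only [mul_apply_eq_comp, h0, map_zero, one_apply_eq_self] at h1
    have := f.orthonormal.1 i
    rw [← h1] at this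
    simp at this
  obtain ⟨j, hj⟩ : ∃ j, inner ℂ (g j) (W (f i)) ≠ 0 := by
    by_contra hcon
    push Not at hcon
    exact hWf (basis_eq_zero g hcon)
  obtain ⟨c, hc⟩ := hmem.2 j
  rw [mul_apply_eq_comp, mul_apply_eq_comp, rankOneProj_apply,
    ContinuousLinearMap.star_eq_adjoint, ContinuousLinearMap.adjoint_inner_right, map_smul] at hc
  have hj' : inner ℂ (W (f i)) (g j) ≠ 0 := by
    rwa [Ne, inner_eq_zero_symm]
  refine ⟨j, (inner ℂ (W (f i)) (g j))⁻¹ * c, ?_⟩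
  rw [mul_smul, ← hc, smul_smul, inv_mul_cancel₀ hj', one_smul]

/-- A compact operator is not bounded below on an orthonormal sequence. -/
lemma compact_orthonormal {K : H →L[ℂ] H} (hK : IsCompactOperator K) {u : ℕ → H}
    (hu : Orthonormal ℂ u) {ε : ℝ} (hε : 0 < ε) : ∃ n, ‖K (u n)‖ < ε := by
  by_contra hcon
  push Not at hcon
  obtain ⟨S, hS, hsub⟩ := IsCompactOperator.image_closedBall_subset_compact
    (f := (K : H →ₗ[ℂ] H)) hK 1
  obtain ⟨y, -, φ, hφ, hlim⟩ := hS.tendsto_subseq (x := fun n => K (u n))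
    (fun n => hsub ⟨u n, by simp [hu.1 n], rfl⟩)
  -- orthonormal sequences tend weakly to zero, so the limit of the subsequence vanishes
  have hy : y = 0 := by
    rw [← inner_self_eq_zero (𝕜 := ℂ)]
    have h1 : Tendsto (fun n => inner ℂ (K (u (φ n))) y) atTop (𝓝 (inner ℂ y y)) :=
      hlim.inner tendsto_const_nhds
    have h2 : Tendsto (fun n => ‖inner ℂ (u n) (K.adjoint y)‖ ^ 2) atTop (𝓝 0) :=
      (hu.inner_products_summable (K.adjoint y)).tendsto_atTop_zero
    have h3 : Tendsto (fun n => ‖inner ℂ (u n) (K.adjoint y)‖) atTop (𝓝 0) := by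
      have := h2.sqrt
      simpa [Real.sqrt_sq] using this
    have h4 := (tendsto_zero_iff_norm_tendsto_zero.mpr h3).comp hφ.tendsto_atTop
    refine tendsto_nhds_unique h1 (h4.congr fun n => ?_)
    simp [ContinuousLinearMap.adjoint_inner_right]
  have h5 : ε ≤ ‖y‖ := ge_of_tendsto' hlim.norm fun n => hcon (φ n)
  rw [hy, norm_zero] at h5
  linarith

/-! ### The rotated Hilbert bases -/

lemma exists_rotated_basis {e : ℕ × Bool → H} (he : Orthonormal ℂ e)
    (hc : ∀ x, (∀ p, inner ℂ (e p) x = 0) → x = 0) (t : ℝ) :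
    ∃ f : HilbertBasis (ℕ × Bool) ℂ H, ⇑f = rotated e t := by
  classical
  have ho : Orthonormal ℂ (rotated e t) := by
    rw [orthonormal_iff_ite]
    rintro ⟨n, i⟩ ⟨m, j⟩
    rw [inner_rotated he]
    cases i <;> cases j <;> simp [rotCoeff]
  have hcs : (Real.cos t : ℂ) * Real.cos t + Real.sin t * Real.sin t = 1 := by
    rw [← Complex.ofReal_mul, ← Complex.ofReal_mul, ← Complex.ofReal_add]
    simp [← sq]
  have hb : (Submodule.span ℂ (Set.range (rotated e t)))ᗮ = ⊥ := by
    rw [eq_bot_iff]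
    intro x hx
    rw [Submodule.mem_bot]
    have h1 : ∀ p, inner ℂ (rotated e t p) x = 0 := fun p =>
      (Submodule.mem_orthogonal _ _).mp hx _ (Submodule.subset_span ⟨p, rfl⟩)
    refine hc x ?_
    rintro ⟨n, i⟩
    have hf := h1 (n, false)
    have ht := h1 (n, true)
    simp only [rotated, inner_add_left, inner_smul_left, map_neg, Complex.conj_ofReal] at hf ht
    cases i
    · linear_combination (-inner ℂ (e (n, false)) x) * hcs + (Real.cos t : ℂ) * hf
        - (Real.sin t : ℂ) * ht
    · linear_combination (-inner ℂ (e (n, true)) x) * hcs + (Real.sin t : ℂ) * hf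
        + (Real.cos t : ℂ) * ht
  exact ⟨HilbertBasis.mkOfOrthogonalEqBot ho hb, by simp⟩

/-- On `[0, π/2)` distinct angles differ by less than `π/2`, so neither `cos (s - t)` nor
`sin (s - t)` vanishes and both have modulus less than `1`. -/
lemma exists_rotCoeff_bound {s t : ℝ} (hs : s ∈ Set.Ico (0 : ℝ) (Real.pi / 2))
    (ht : t ∈ Set.Ico (0 : ℝ) (Real.pi / 2)) (hst : s ≠ t) :
    ∃ m : ℝ, 0 ≤ m ∧ m < 1 ∧ ∀ i j, |rotCoeff s t i j| ≤ m := by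
  have hsin : Real.sin (s - t) ≠ 0 := by
    rw [Ne, Real.sin_eq_zero_iff_of_lt_of_lt (by linarith [hs.1, ht.2, Real.pi_pos])
      (by linarith [hs.2, ht.1, Real.pi_pos])]
    exact sub_ne_zero.mpr hst
  have hcos : Real.cos (s - t) ≠ 0 :=
    (Real.cos_pos_of_mem_Ioo ⟨by linarith [hs.1, ht.2], by linarith [hs.2, ht.1]⟩).ne'
  have hid := Real.sin_sq_add_cos_sq (s - t)
  have h1 := pow_pos (abs_pos.mpr hsin) 2
  have h2 := pow_pos (abs_pos.mpr hcos) 2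
  rw [sq_abs] at h1 h2
  refine ⟨max |Real.cos (s - t)| |Real.sin (s - t)|, by positivity, max_lt ?_ ?_, ?_⟩
  · rw [← sq_lt_one_iff_abs_lt_one]; linarith
  · rw [← sq_lt_one_iff_abs_lt_one]; linarith
  · intro i j
    cases i <;> cases j <;> simp [rotCoeff]

end CartanAux

/-- Let `I` be an operator ideal with `F(H) ⊆ I ⊆ K(H)` (a proper nonzero
ideal).  Then there exists a family `(C_t)_{t ∈ [0, π/2)}` of Cartan subalgebras of `I` which
are pairwise not `U_I(H)`-conjugate; in particular there are uncountably many
`U_I(H)`-conjugacy classes of Cartan subalgebras of `I`. -/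
theorem uncountably_many_conjugacy_classes_of_cartan_subalgebras
    {H : Type*} [NormedAddCommGroup H] [InnerProductSpace ℂ H] [CompleteSpace H]
    (b : HilbertBasis ℕ ℂ H)
    (I : Set (H →L[ℂ] H)) (hI : IsOperatorIdeal I)
    (hFI : ∀ T : H →L[ℂ] H,
      FiniteDimensional ℂ (LinearMap.range (T : H →ₗ[ℂ] H)) → T ∈ I)
    (hIK : ∀ T ∈ I, IsCompactOperator (T : H →L[ℂ] H)) :
    ∃ C : ℝ → Set (H →L[ℂ] H),
      (∀ t ∈ Ico (0 : ℝ) (Real.pi / 2), IsCartanSubalgebra I (C t)) ∧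
      (∀ s ∈ Ico (0 : ℝ) (Real.pi / 2), ∀ t ∈ Ico (0 : ℝ) (Real.pi / 2), s ≠ t →
        ¬ ∃ W : H →L[ℂ] H, W ∈ unitary (H →L[ℂ] H) ∧ W - 1 ∈ I ∧
          (fun T : H →L[ℂ] H => W * T * star W) '' C s = C t) := by
  let σ : ℕ × Bool ≃ ℕ := (Equiv.prodComm _ _).trans Equiv.boolProdNatEquivNat
  let e : ℕ × Bool → H := fun p => b (σ p)
  have he : Orthonormal ℂ e := b.orthonormal.comp σ σ.injective
  have hc : ∀ x, (∀ p, inner ℂ (e p) x = 0) → x = 0 := fun x hx =>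
    basis_eq_zero b fun n => by simpa [e] using hx (σ.symm n)
  choose f hf using exists_rotated_basis he hc
  refine ⟨fun t => diagonalPart I (f t), fun t _ => isCartan_diagonalPart (f t) I hI hFI, ?_⟩
  rintro s hs t ht hst ⟨W, hW, hWI, hconj⟩
  obtain ⟨m, hm0, hm1, hm⟩ := exists_rotCoeff_bound hs ht hst
  have hu : Orthonormal ℂ (fun n : ℕ => f s (n, false)) :=
    (f s).orthonormal.comp (fun n : ℕ => (n, false)) fun a c h => by simpa using h
  obtain ⟨n, hn⟩ := compact_orthonormal (hIK _ hWI) hu (sub_pos.mpr hm1)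
  obtain ⟨j, c, hj⟩ := exists_line (f s) (f t) hFI hW hconj (n, false)
  have hunit : ‖W (f s (n, false))‖ = 1 := by
    rw [Unitary.norm_map ⟨W, hW⟩, (f s).orthonormal.1]
  have hcn : ‖c‖ = 1 := by
    rw [hj, norm_smul, (f t).orthonormal.1, mul_one] at hunit
    exact hunit
  have hin : ‖inner ℂ (f s (n, false)) (W (f s (n, false)))‖ ≤ m := by
    rw [hj, inner_smul_right, norm_mul, hcn, one_mul, hf, hf, inner_rotated he]
    split_ifs
    · rw [Complex.norm_real]
      exact hm _ _
    · simpa using hm0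
  -- `1 - ⟪u, W u⟫ = -⟪u, (W - 1) u⟫` for the unit vector `u = f s (n, false)`
  have hexp : inner ℂ (f s (n, false)) ((W - 1) (f s (n, false))) =
      inner ℂ (f s (n, false)) (W (f s (n, false))) - 1 := by
    rw [sub_apply, inner_sub_right, one_apply_eq_self,
      inner_self_eq_norm_sq_to_K, (f s).orthonormal.1]
    simp
  have hcs := norm_inner_le_norm (𝕜 := ℂ) (f s (n, false)) ((W - 1) (f s (n, false)))
  rw [(f s).orthonormal.1, one_mul, hexp, norm_sub_rev] at hcs
  have htri := norm_sub_norm_le (1 : ℂ) (inner ℂ (f s (n, false)) (W (f s (n, false))))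
  rw [norm_one] at htri
  linarith
end

section
/- Let T be a unitary operator on H such that TDT* is diagonal with respect to the basis b for every finite-rank operator D that is diagonal with respect to b. Then there exist a unique permutation σ of the positive integers and a unique sequence u = (u_n)_{n≥1} of complex numbers of modulus 1 such that T b_n = u_n b_{σ(n)} for every n (equivalently, T = V_{σ⁻¹}·diag u up to the labeling convention). If in addition T − 1 is compact, then σ is a finite permutation. -/
/-!
Testing the hypothesis on the rank-one projection `D` onto `b n` gives
`T D T* (b m) = ⟪T bₙ, bₘ⟫ • T bₙ`. As `T bₙ ≠ 0`, some coefficient `⟪T bₙ, bₘ⟫` is nonzero, and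
diagonality at that `m` forces `T bₙ` to be a multiple of `bₘ`. This defines `σ n = m`; the scalar
is unimodular because `T` is isometric, `σ` is injective because `T` preserves orthogonality, and
surjective because a missed `bₘ` would be annihilated by the injective operator `T*`.

If `T - 1` is compact and `σ n ≠ n` for infinitely many `n`, then along a sequence of such `n` the
vectors `(T - 1) bₙ` converge in norm to some `y`. Since `⟪bₙ, y⟫ → 0` by Bessel's inequality,
`⟪bₙ, (T - 1) bₙ⟫ → 0`, whereas this inner product equals `-1` for each such `n`.
-/

open Filter Topology

section

variable {H : Type*} [NormedAddCommGroup H] [InnerProductSpace ℂ H]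

theorem eq_zero_of_inner_basis (b : HilbertBasis ℕ ℂ H) (x : H)
    (h : ∀ m, inner ℂ (b m) x = 0) : x = 0 := by
  apply b.repr.injective
  ext m
  simp [b.repr_apply_apply, h]

theorem inner_basis (b : HilbertBasis ℕ ℂ H) (m n : ℕ) :
    inner ℂ (b m) (b n) = if m = n then (1 : ℂ) else 0 :=
  orthonormal_iff_ite.mp b.orthonormal m n

theorem norm_basis (b : HilbertBasis ℕ ℂ H) (n : ℕ) : ‖b n‖ = 1 := b.orthonormal.1 n

theorem eq_of_smul_basis_eq (b : HilbertBasis ℕ ℂ H) {u v : ℂ} {m n : ℕ} (hu : u ≠ 0)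
    (h : u • b m = v • b n) : m = n ∧ u = v := by
  have h1 := congrArg (fun x => inner ℂ (b m) x) h
  simp only [inner_smul_right, inner_basis] at h1
  by_cases hmn : m = n
  · simpa [hmn] using h1
  · simp [hmn, hu] at h1

/-- Diagonality of `T D T*` for the rank-one projection `D` onto `b n` makes `T (b n)` a unimodular
multiple of a basis vector. -/
theorem exists_image_basis [CompleteSpace H] (b : HilbertBasis ℕ ℂ H)
    (T : H →L[ℂ] H) (hT : T ∈ unitary (H →L[ℂ] H))
    (hdiag : ∀ D : H →L[ℂ] H,
      FiniteDimensional ℂ (LinearMap.range (D : H →ₗ[ℂ] H)) →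
      (∀ n : ℕ, ∃ c : ℂ, D (b n) = c • b n) →
      ∀ n : ℕ, ∃ c : ℂ, (T * D * star T) (b n) = c • b n) (n : ℕ) :
    ∃ (m : ℕ) (u : ℂ), ‖u‖ = 1 ∧ T (b n) = u • b m := by
  have hnorm : ‖T (b n)‖ = 1 := by
    rw [ContinuousLinearMap.norm_map_of_mem_unitary hT, norm_basis]
  obtain ⟨m, hm⟩ : ∃ m, inner ℂ (b m) (T (b n)) ≠ 0 := by
    by_contra! h
    simp [eq_zero_of_inner_basis b _ h] at hnorm
  obtain ⟨c, hc⟩ := hdiag ((innerSL ℂ (b n)).smulRight (b n))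
    (by
      refine Submodule.finiteDimensional_of_le (S₂ := Submodule.span ℂ {b n}) ?_
      rintro _ ⟨x, rfl⟩
      exact Submodule.mem_span_singleton.mpr ⟨inner ℂ (b n) x, by simp⟩)
    (fun k => by
      by_cases hk : n = k
      · subst hk
        exact ⟨inner ℂ (b n) (b n), by simp⟩
      · exact ⟨0, by simp [inner_basis, hk]⟩) m
  have hc' : inner ℂ (T (b n)) (b m) • T (b n) = c • b m := by
    rw [← hc]
    simp [ContinuousLinearMap.star_eq_adjoint, ContinuousLinearMap.adjoint_inner_right]
  have ha : inner ℂ (T (b n)) (b m) ≠ 0 := by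
    rwa [Ne, inner_eq_zero_symm]
  have hTb : T (b n) = ((inner ℂ (T (b n)) (b m))⁻¹ * c) • b m := by
    rw [mul_smul, ← hc', inv_smul_smul₀ ha]
  refine ⟨m, _, ?_, hTb⟩
  rw [hTb, norm_smul, norm_basis, mul_one] at hnorm
  exact hnorm

theorem bijective_of_image_basis [CompleteSpace H] (b : HilbertBasis ℕ ℂ H)
    (T : H →L[ℂ] H) (hT : T ∈ unitary (H →L[ℂ] H)) (s : ℕ → ℕ) (u : ℕ → ℂ)
    (hu : ∀ n, ‖u n‖ = 1) (h : ∀ n, T (b n) = u n • b (s n)) : Function.Bijective s := by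
  have hu0 : ∀ n, u n ≠ 0 := fun n => by
    rw [← norm_ne_zero_iff, hu n]
    exact one_ne_zero
  constructor
  · intro m n hmn
    by_contra hne
    have h1 : inner ℂ (T (b m)) (T (b n)) = 0 := by
      rw [ContinuousLinearMap.inner_map_map_of_mem_unitary hT, inner_basis, if_neg hne]
    rw [h, h, hmn, inner_smul_left, inner_smul_right, inner_basis] at h1
    simp [hu0] at h1
  · intro m
    by_contra! hm
    have h1 : star T (b m) = 0 := by
      refine eq_zero_of_inner_basis b _ fun n => ?_
      rw [ContinuousLinearMap.star_eq_adjoint, ContinuousLinearMap.adjoint_inner_right, h,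
        inner_smul_left, inner_basis, if_neg (hm n), mul_zero]
    have h2 := ContinuousLinearMap.norm_map_of_mem_unitary (Unitary.star_mem hT) (b m)
    rw [h1, norm_basis, norm_zero] at h2
    exact zero_ne_one h2

theorem tendsto_inner_basis (b : HilbertBasis ℕ ℂ H) (y : H) :
    Tendsto (fun n => inner ℂ (b n) y) atTop (𝓝 0) := by
  have h := (b.orthonormal.inner_products_summable y).tendsto_atTop_zero
  rw [tendsto_zero_iff_norm_tendsto_zero]
  simpa using h.sqrt

theorem finite_support_of_compact (b : HilbertBasis ℕ ℂ H) (T : H →L[ℂ] H)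
    (s : ℕ → ℕ) (u : ℕ → ℂ) (h : ∀ n, T (b n) = u n • b (s n))
    (hK : IsCompactOperator ((T - 1 : H →L[ℂ] H) : H → H)) : {n : ℕ | s n ≠ n}.Finite := by
  by_contra hinf
  -- `f` enumerates the non-fixed points of `s` in increasing order.
  obtain ⟨f, hf, hfs⟩ : ∃ f : ℕ → ℕ, StrictMono f ∧ ∀ k, s (f k) ≠ f k :=
    ⟨_, Nat.nth_strictMono hinf, Nat.nth_mem_of_infinite hinf⟩
  have hcomp := IsCompactOperator.isCompact_closure_image_closedBall (𝕜₁ := ℂ) (𝕜₂ := ℂ)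
    (f := ((T - 1 : H →L[ℂ] H) : H →ₗ[ℂ] H)) hK 1
  obtain ⟨y, -, g, hg, hy⟩ := hcomp.tendsto_subseq (x := fun k => (T - 1) (b (f k)))
    (fun k => subset_closure ⟨b (f k), by simp [norm_basis], rfl⟩)
  have hfg : Tendsto (fun k => f (g k)) atTop atTop := hf.tendsto_atTop.comp hg.tendsto_atTop
  have h1 : Tendsto (fun k => inner ℂ (b (f (g k))) y) atTop (𝓝 0) :=
    (tendsto_inner_basis b y).comp hfg
  have h2 : Tendsto (fun k => inner ℂ (b (f (g k))) ((T - 1) (b (f (g k))) - y)) atTop (𝓝 0) := by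
    refine squeeze_zero_norm (fun k => ?_) (tendsto_iff_norm_sub_tendsto_zero.mp hy)
    refine (norm_inner_le_norm _ _).trans ?_
    simp [norm_basis]
  have h3 := h2.add h1
  have h4 : ∀ k, inner ℂ (b (f (g k))) ((T - 1) (b (f (g k))) - y)
      + inner ℂ (b (f (g k))) y = -1 := fun k => by
    rw [← inner_add_right, sub_add_cancel, sub_apply, inner_sub_right, h,
      inner_smul_right, inner_basis, if_neg (hfs (g k)).symm]
    simp [norm_basis]
  simp only [h4, add_zero] at h3
  have h5 := tendsto_nhds_unique h3 tendsto_const_nhds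
  norm_num at h5

end

/-- Let `T` be a unitary operator on `H` such that `T D T*` is diagonal
(w.r.t. the basis `b`) for every finite-rank operator `D` diagonal w.r.t. `b`.  Then there
exist a unique permutation `σ` of `ℕ` and a unique sequence `u` of unimodular complex numbers
such that `T bₙ = uₙ • b_{σ(n)}` for all `n`.  If moreover `T - 1` is compact, then `σ` is a
finite permutation. -/
theorem normalizer_of_diagonal_is_permutation_times_diagonal
    {H : Type*} [NormedAddCommGroup H] [InnerProductSpace ℂ H] [CompleteSpace H]
    (b : HilbertBasis ℕ ℂ H)
    (T : H →L[ℂ] H) (hT : T ∈ unitary (H →L[ℂ] H))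
    (hdiag : ∀ D : H →L[ℂ] H,
      FiniteDimensional ℂ (LinearMap.range (D : H →ₗ[ℂ] H)) →
      (∀ n : ℕ, ∃ c : ℂ, D (b n) = c • b n) →
      ∀ n : ℕ, ∃ c : ℂ, (T * D * star T) (b n) = c • b n) :
    (∃! p : Equiv.Perm ℕ × (ℕ → ℂ),
      (∀ n : ℕ, ‖p.2 n‖ = 1) ∧ ∀ n : ℕ, T (b n) = p.2 n • b (p.1 n)) ∧
    (∀ (σ : Equiv.Perm ℕ) (u : ℕ → ℂ),
      (∀ n : ℕ, ‖u n‖ = 1) → (∀ n : ℕ, T (b n) = u n • b (σ n)) →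
      IsCompactOperator ((T - 1 : H →L[ℂ] H) : H → H) →
      {n : ℕ | σ n ≠ n}.Finite) := by
  refine ⟨?_, fun σ u _ h hK => finite_support_of_compact b T σ u h hK⟩
  choose s u hu h using exists_image_basis b T hT hdiag
  refine ⟨(Equiv.ofBijective s (bijective_of_image_basis b T hT s u hu h), u), ⟨hu, h⟩, ?_⟩
  rintro ⟨σ, v⟩ ⟨hv, hσ⟩
  have key : ∀ n, σ n = s n ∧ v n = u n := fun n => by
    refine eq_of_smul_basis_eq b ?_ ((hσ n).symm.trans (h n))
    rw [← norm_ne_zero_iff, hv n]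
    exact one_ne_zero
  exact Prod.ext (Equiv.ext fun n => (key n).1) (funext fun n => (key n).2)
end
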